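/- Let X = (x_{ij}) be an m×n totally positive real matrix, let 1 ≤ k ≤ m−1, let T be the Γ-scaffolding of X, let T̂ be the k×n matrix consisting of the first k rows of T, and let X̂ = X_Γ(T̂). Then there exist strongly positive vectors r, q, s ∈ ℝⁿ satisfying, for every j ∈ [n]: (A) Σ_{ℓ=j}^{n} [det X[{k+1, k+2⋯},{j, ℓ+1⋯}] / det X[{k+1, k+2⋯},{ℓ, ℓ+1⋯}]] r_ℓ = Σ_{i=1}^{j} [det X[{⋯k−1, k},{⋯i−1, j}] / det X[{⋯k−1, k},{⋯i−1, i}]] q_i, and (B) r_j = Σ_{i=1}^{j} [det X̂[{⋯k−1, k},{⋯i−1, j}] / det X̂[{⋯k−1, k},{⋯i−1, i}]] s_i. -/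

import Mathlib

/-!
Write (A) as `U r = L q` and (B) as `r = M s`, where `U` is upper triangular and `L`, `M` are lower
triangular, `L` with unit diagonal. The vector `q` is determined by `s`, so it is enough to find `s > 0`
with `L⁻¹ U M s > 0` and `M s > 0`. The last column of `L⁻¹ U M` turns out to be positive. Hence a
large multiple of the last unit vector plus a fixed vector `s₀` with `s₀ > 0` and `M s₀ > 0` works
(`exists_positive_solution`); such an `s₀` exists because the first column of `M` is positive.

The last column of `M` is the last unit vector as soon as the bottom right maximal square minor of
`Xhat` is nonzero. Deleting the last row of a scaffolding changes the remaining rows of its path-sum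
matrix by a lower unitriangular column operation (`XGamma_castSucc`: a path either avoids that row
or makes its last turn in it). So minors in the rightmost columns do not change, and the minor in
question equals a minor of `X`, which is positive (`corner_eq`).

The last column of `U` is row `k + 1` of `X` divided by its last entry. It is a positive combination
of the columns of `L` (`next_row_eq`, `resid_self_pos`): when the coefficients are chosen
greedily, the residual after `i` steps is row `k + 1` plus a combination of the `min k i` rows above
it, and it vanishes in the `min k i` columns before the next one. A row operation therefore identifies its leading entry
with a quotient of two contiguous minors of `X` (`resid_self_pos`).
-/

open Finset

/-- A real matrix is totally positive if every minor (determinant of a square submatrix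
obtained by selecting rows and columns in increasing order) is positive. -/
def TotallyPositive {m n : ℕ} (A : Matrix (Fin m) (Fin n) ℝ) : Prop :=
  ∀ (r : ℕ) (f : Fin r → Fin m) (g : Fin r → Fin n),
    StrictMono f → StrictMono g → 0 < (A.submatrix f g).det

/-- A matrix is (strongly) positive if all of its entries are positive. -/
def EntrywisePos {m n : ℕ} (A : Matrix (Fin m) (Fin n) ℝ) : Prop :=
  ∀ i j, 0 < A i j

/-- The weight of the Γ-path encoded by the pair of finsets `(I, J)`.
A Γ-path with Γ-turns `(i₁,j₁), …, (i_p,j_p)`, where `i₁ < i₂ < ⋯ < i_p` and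
`j₁ > j₂ > ⋯ > j_p`, corresponds to the pair `I = {i₁,…,i_p}`, `J = {j₁,…,j_p}`;
the path runs from row vertex `i₁ = min I` to column vertex `j_p = min J`.
Its weight is `t_{i₁j₁} · ∏_{s=1}^{p−1} t_{i_{s+1} j_s}⁻¹ · t_{i_{s+1} j_{s+1}}`. -/
noncomputable def gammaWeight {m n : ℕ} (T : Matrix (Fin m) (Fin n) ℝ)
    (I : Finset (Fin m)) (J : Finset (Fin n)) : ℝ :=
  if h : I.Nonempty ∧ J.Nonempty ∧ I.card = J.card then
    let p := I.card
    let row : ℕ → Fin m := fun s => (I.sort (· ≤ ·)).getD s (I.min' h.1)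
    let col : ℕ → Fin n := fun s => (J.sort (· ≤ ·)).getD (p - 1 - s) (J.min' h.2.1)
    T (row 0) (col 0) *
      ∏ s ∈ Finset.range (p - 1),
        ((T (row (s + 1)) (col s))⁻¹ * T (row (s + 1)) (col (s + 1)))
  else 0

/-- The Γ-path-sum matrix `X_Γ(T)`: its `(i,j)` entry is the sum of the weights of all
Γ-paths from row vertex `i` to column vertex `j`. -/
noncomputable def XGamma {m n : ℕ} (T : Matrix (Fin m) (Fin n) ℝ) :
    Matrix (Fin m) (Fin n) ℝ :=
  Matrix.of fun i j =>
    ∑ I ∈ Finset.univ.filter (fun I : Finset (Fin m) => I.min = (i : WithTop (Fin m))),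
      ∑ J ∈ Finset.univ.filter (fun J : Finset (Fin n) =>
          J.min = (j : WithTop (Fin n)) ∧ J.card = I.card),
        gammaWeight T I J

/-- The weight of the L-path encoded by the pair of finsets `(I, J)`.
An L-path with turns `(i₁,j₁), …, (i_p,j_p)`, where `i₁ > i₂ > ⋯ > i_p` and
`j₁ < j₂ < ⋯ < j_p`, corresponds to `I = {i₁,…,i_p}`, `J = {j₁,…,j_p}`;
the path runs from row vertex `i₁ = max I` to column vertex `j_p = max J`. -/
noncomputable def lWeight {m n : ℕ} (T : Matrix (Fin m) (Fin n) ℝ)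
    (I : Finset (Fin m)) (J : Finset (Fin n)) : ℝ :=
  if h : I.Nonempty ∧ J.Nonempty ∧ I.card = J.card then
    let p := I.card
    let row : ℕ → Fin m := fun s => (I.sort (· ≤ ·)).getD (p - 1 - s) (I.min' h.1)
    let col : ℕ → Fin n := fun s => (J.sort (· ≤ ·)).getD s (J.min' h.2.1)
    T (row 0) (col 0) *
      ∏ s ∈ Finset.range (p - 1),
        ((T (row (s + 1)) (col s))⁻¹ * T (row (s + 1)) (col (s + 1)))
  else 0

/-- The L-path-sum matrix `X_L(T)`. -/
noncomputable def XL {m n : ℕ} (T : Matrix (Fin m) (Fin n) ℝ) :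
    Matrix (Fin m) (Fin n) ℝ :=
  Matrix.of fun i j =>
    ∑ I ∈ Finset.univ.filter (fun I : Finset (Fin m) => I.max = (i : WithBot (Fin m))),
      ∑ J ∈ Finset.univ.filter (fun J : Finset (Fin n) =>
          J.max = (j : WithBot (Fin n)) ∧ J.card = I.card),
        lWeight T I J

/-- The set of internal vertices traversed by the Γ-path encoded by `(I, J)`:
horizontal segments `{(i_s, b) : j_s ≤ b ≤ j_{s-1}}` (with `j₀` interpreted as the last
column) and vertical segments `{(a, j_s) : i_s ≤ a ≤ i_{s+1}}` (with `i_{p+1}` interpreted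
as the last row). -/
def pathVerts {m n : ℕ} (I : Finset (Fin m)) (J : Finset (Fin n)) :
    Finset (Fin m × Fin n) :=
  Finset.univ.filter fun v =>
    (∃ s ∈ Finset.range I.card,
        v.1 = (I.sort (· ≤ ·)).getD s v.1 ∧
        (J.sort (· ≤ ·)).getD (J.card - 1 - s) v.2 ≤ v.2 ∧
        (s = 0 ∨ v.2 ≤ (J.sort (· ≤ ·)).getD (J.card - s) v.2)) ∨
    (∃ s ∈ Finset.range I.card,
        v.2 = (J.sort (· ≤ ·)).getD (J.card - 1 - s) v.2 ∧
        (I.sort (· ≤ ·)).getD s v.1 ≤ v.1 ∧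
        (s + 1 = I.card ∨ v.1 ≤ (I.sort (· ≤ ·)).getD (s + 1) v.1))

/-- The sequence of matrices produced by Cauchon's Algorithm: `cauchonSeq X t` is the
matrix obtained after performing the first `t` steps, the steps being indexed by the
positions `(i,j) ∈ [m]×[n]` (1-based) in increasing reverse lexicographic order
(`(m,n)` first); the step at 1-based position `(i,j)` is performed on `cauchonSeq X t`
with `t = (m−i)·n + (n−j)`, so that the matrix `X^{(i,j)}` of Cauchon's Algorithm is
`cauchonSeq X ((m−i)·n + (n−j))`. -/
noncomputable def cauchonSeq {m n : ℕ} (X : Matrix (Fin m) (Fin n) ℝ) :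
    ℕ → Matrix (Fin m) (Fin n) ℝ
  | 0 => X
  | t + 1 =>
    let Y := cauchonSeq X t
    Matrix.of fun k l =>
      let i0 : Fin m := ⟨m - 1 - t / n,
        lt_of_le_of_lt (Nat.sub_le _ _) (by have := k.isLt; omega)⟩
      let j0 : Fin n := ⟨n - 1 - t % n,
        lt_of_le_of_lt (Nat.sub_le _ _) (by have := l.isLt; omega)⟩
      if (k : ℕ) < (i0 : ℕ) ∧ (l : ℕ) < (j0 : ℕ) then
        Y k l - Y k j0 * (Y i0 j0)⁻¹ * Y i0 l
      else Y k l

/-- The output `T = X^{(1,1)}` of Cauchon's Algorithm. -/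
noncomputable def cauchonOutput {m n : ℕ} (X : Matrix (Fin m) (Fin n) ℝ) :
    Matrix (Fin m) (Fin n) ℝ :=
  cauchonSeq X ((m - 1) * n + (n - 1))

/-- `contigMinorTL A i j` (1-based `i`, `j`) is the minor `det A[{i⋯},{j⋯}]` of the
largest contiguous submatrix of `A` with top-left corner `(i,j)`, i.e. with rows
`i, …, i+k` and columns `j, …, j+k` where `k = min(M−i, N−j)`; it is `1` (the empty
determinant) if `(i,j)` is out of range. -/
noncomputable def contigMinorTL {M N : ℕ} (A : Matrix (Fin M) (Fin N) ℝ) (i j : ℕ) : ℝ :=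
  if h : 1 ≤ i ∧ i ≤ M ∧ 1 ≤ j ∧ j ≤ N then
    (A.submatrix
      (fun s : Fin (min (M - i) (N - j) + 1) =>
        (⟨i - 1 + (s : ℕ), by have := s.isLt; omega⟩ : Fin M))
      (fun s : Fin (min (M - i) (N - j) + 1) =>
        (⟨j - 1 + (s : ℕ), by have := s.isLt; omega⟩ : Fin N))).det
  else 1

/-- `borderMinorTL A i₀ j₀ i j` (1-based indices, `i₀ < i`, `j₀ < j`) is the minor
`det A[{i₀, i⋯},{j₀, j⋯}]` with rows `{i₀} ∪ {i, …, i+k}` and columns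
`{j₀} ∪ {j, …, j+k}` where `k = min(M−i, N−j)`; when the contiguous part is out of range
(`i > M` or `j > N`) it is the single entry `A[{i₀},{j₀}]`, and it is `1` if `(i₀,j₀)`
is out of range. -/
noncomputable def borderMinorTL {M N : ℕ} (A : Matrix (Fin M) (Fin N) ℝ)
    (i₀ j₀ i j : ℕ) : ℝ :=
  if h : 1 ≤ i₀ ∧ i₀ ≤ M ∧ 1 ≤ j₀ ∧ j₀ ≤ N then
    if h2 : i₀ < i ∧ i ≤ M ∧ j₀ < j ∧ j ≤ N then
      (A.submatrix
        (fun s : Fin (min (M - i) (N - j) + 2) =>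
          if (s : ℕ) = 0 then (⟨i₀ - 1, by omega⟩ : Fin M)
          else ⟨i - 1 + ((s : ℕ) - 1), by have := s.isLt; omega⟩)
        (fun s : Fin (min (M - i) (N - j) + 2) =>
          if (s : ℕ) = 0 then (⟨j₀ - 1, by omega⟩ : Fin N)
          else ⟨j - 1 + ((s : ℕ) - 1), by have := s.isLt; omega⟩)).det
    else A ⟨i₀ - 1, by omega⟩ ⟨j₀ - 1, by omega⟩
  else 1

/-- `borderMinorBR A i j i₀ j₀` (1-based indices, `i < i₀`, `j < j₀`) is the minor
`det A[{⋯i, i₀},{⋯j, j₀}]` with rows `{i−k, …, i} ∪ {i₀}` and columns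
`{j−k, …, j} ∪ {j₀}` where `k = min(i−1, j−1)`; when the contiguous part is empty
(`i = 0` or `j = 0`) it is the single entry `A[{i₀},{j₀}]`, and it is `1` if `(i₀,j₀)`
is out of range. -/
noncomputable def borderMinorBR {M N : ℕ} (A : Matrix (Fin M) (Fin N) ℝ)
    (i j i₀ j₀ : ℕ) : ℝ :=
  if h : 1 ≤ i₀ ∧ i₀ ≤ M ∧ 1 ≤ j₀ ∧ j₀ ≤ N then
    if h2 : 1 ≤ i ∧ i < i₀ ∧ 1 ≤ j ∧ j < j₀ then
      (A.submatrix
        (fun s : Fin (min (i - 1) (j - 1) + 2) =>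
          if (s : ℕ) = min (i - 1) (j - 1) + 1 then (⟨i₀ - 1, by omega⟩ : Fin M)
          else ⟨i - 1 - min (i - 1) (j - 1) + (s : ℕ), by have := s.isLt; omega⟩)
        (fun s : Fin (min (i - 1) (j - 1) + 2) =>
          if (s : ℕ) = min (i - 1) (j - 1) + 1 then (⟨j₀ - 1, by omega⟩ : Fin N)
          else ⟨j - 1 - min (i - 1) (j - 1) + (s : ℕ), by have := s.isLt; omega⟩)).det
    else A ⟨i₀ - 1, by omega⟩ ⟨j₀ - 1, by omega⟩
  else 1

/-! ### Weights and sums of Γ-paths -/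

theorem gammaWeight_eq {m n : ℕ} (T : Matrix (Fin m) (Fin n) ℝ)
    (I : Finset (Fin m)) (J : Finset (Fin n)) (hI : I.Nonempty) (hc : J.card = I.card)
    (a : Fin m) (b : Fin n) :
    gammaWeight T I J = T ((I.sort (· ≤ ·)).getD 0 a) ((J.sort (· ≤ ·)).getD (I.card - 1) b) *
      ∏ s ∈ Finset.range (I.card - 1),
        ((T ((I.sort (· ≤ ·)).getD (s + 1) a) ((J.sort (· ≤ ·)).getD (I.card - 1 - s) b))⁻¹ *
          T ((I.sort (· ≤ ·)).getD (s + 1) a)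
            ((J.sort (· ≤ ·)).getD (I.card - 1 - (s + 1)) b)) := by
  have hp : 0 < I.card := hI.card_pos
  have hJ : J.Nonempty := by rw [← Finset.card_pos]; omega
  have hr : ∀ s, s < I.card → ∀ d, (I.sort (· ≤ ·)).getD s d = (I.sort (· ≤ ·)).getD s a := by
    intro s hs d
    rw [List.getD_eq_getElem _ _ (by simpa using hs), List.getD_eq_getElem _ _ (by simpa using hs)]
  have hcl : ∀ s, s < I.card → ∀ d, (J.sort (· ≤ ·)).getD s d = (J.sort (· ≤ ·)).getD s b := by
    intro s hs d
    rw [List.getD_eq_getElem _ _ (by simpa [hc] using hs),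
      List.getD_eq_getElem _ _ (by simpa [hc] using hs)]
  unfold gammaWeight
  rw [dif_pos ⟨hI, hJ, hc.symm⟩]
  simp only
  rw [hr 0 hp, hcl (I.card - 1 - 0) (by omega)]
  congr 1
  refine Finset.prod_congr rfl fun s hs => ?_
  rw [Finset.mem_range] at hs
  rw [hr _ (by omega), hcl (I.card - 1 - s) (by omega), hcl (I.card - 1 - (s + 1)) (by omega)]

theorem sort_map_castSucc {m : ℕ} (I : Finset (Fin m)) :
    (I.map Fin.castSuccEmb).sort (· ≤ ·) = (I.sort (· ≤ ·)).map Fin.castSucc := by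
  rw [← Finset.map_sort Fin.castSuccEmb I (· ≤ ·) (· ≤ ·) (by simp)]
  rfl

theorem sort_insert_last {m : ℕ} (I : Finset (Fin m)) :
    (insert (Fin.last m) (I.map Fin.castSuccEmb)).sort (· ≤ ·) =
      (I.sort (· ≤ ·)).map Fin.castSucc ++ [Fin.last m] := by
  have hnd : ((I.sort (· ≤ ·)).map Fin.castSucc ++ [Fin.last m]).Nodup := by
    rw [List.nodup_append]
    refine ⟨(Finset.sort_nodup I _).map (Fin.castSucc_injective m), by simp, ?_⟩
    intro x hx y hy
    simp only [List.mem_map, List.mem_singleton] at hx hy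
    obtain ⟨z, -, rfl⟩ := hx
    rw [hy]
    exact (Fin.castSucc_lt_last z).ne
  have he : insert (Fin.last m) (I.map Fin.castSuccEmb) =
      ((I.sort (· ≤ ·)).map Fin.castSucc ++ [Fin.last m]).toFinset := by
    ext x
    simp
  rw [he, List.toFinset_sort _ hnd, List.pairwise_append]
  refine ⟨?_, by simp, ?_⟩
  · rw [← sort_map_castSucc]
    exact Finset.pairwise_sort _ _
  · intro x _ y hy
    rw [List.mem_singleton] at hy
    rw [hy]
    exact Fin.le_last x

/-- Paths that avoid the last row are exactly the paths of the matrix with that row removed. -/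
theorem gammaWeight_map {m n : ℕ} (T : Matrix (Fin (m + 1)) (Fin n) ℝ)
    (I : Finset (Fin m)) (J : Finset (Fin n)) (hI : I.Nonempty) (hc : J.card = I.card) :
    gammaWeight T (I.map Fin.castSuccEmb) J = gammaWeight (T.submatrix Fin.castSucc id) I J := by
  obtain ⟨a, -⟩ := id hI
  have hJ : J.Nonempty := by rw [← Finset.card_pos, hc]; exact hI.card_pos
  obtain ⟨b, -⟩ := hJ
  rw [gammaWeight_eq T _ J (hI.map) (by simpa using hc) a.castSucc b,
    gammaWeight_eq _ I J hI hc a b, sort_map_castSucc]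
  simp only [List.getD_map, Finset.card_map, Matrix.submatrix_apply, id]

/-- A path that takes its last turn in the last row, at column `j`, is a path of the matrix with
that row removed, ending in some column `c > j`, followed by one more turn. -/
theorem gammaWeight_insert {m n : ℕ} (T : Matrix (Fin (m + 1)) (Fin n) ℝ)
    (I : Finset (Fin m)) (J : Finset (Fin n)) (hI : I.Nonempty) (hc : J.card = I.card)
    (j c : Fin n) (hjc : j < c) (hmin : J.min = c) :
    gammaWeight T (insert (Fin.last m) (I.map Fin.castSuccEmb)) (insert j J) =
      gammaWeight (T.submatrix Fin.castSucc id) I J * ((T (Fin.last m) c)⁻¹ * T (Fin.last m) j) := by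
  obtain ⟨a, -⟩ := id hI
  have hp : 0 < I.card := hI.card_pos
  have hJ : J.Nonempty := by rw [← Finset.card_pos, hc]; exact hp
  have hjlt : ∀ x ∈ J, j < x := fun x hx =>
    lt_of_lt_of_le hjc (Finset.min_le_of_eq hx hmin)
  have hjJ : j ∉ J := fun h => lt_irrefl _ (hjlt j h)
  have hlast : Fin.last m ∉ I.map Fin.castSuccEmb := by
    simp only [Finset.mem_map, not_exists, not_and]
    intro x _ h
    exact (Fin.castSucc_lt_last x).ne h
  have hc1 : (insert (Fin.last m) (I.map Fin.castSuccEmb)).card = I.card + 1 := by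
    rw [Finset.card_insert_of_notMem hlast, Finset.card_map]
  have hc2 : (insert j J).card = J.card + 1 := Finset.card_insert_of_notMem hjJ
  rw [gammaWeight_eq T _ (insert j J) (Finset.insert_nonempty _ _) (by rw [hc1, hc2, hc])
      a.castSucc c, gammaWeight_eq _ I J hI hc a c, sort_insert_last,
    Finset.sort_insert (· ≤ ·) (fun b hb => (hjlt b hb).le) hjJ, hc1]
  obtain ⟨q, hq⟩ : ∃ q, I.card = q + 1 := ⟨I.card - 1, by omega⟩
  have hrow : ∀ s, s < q + 1 → ((I.sort (· ≤ ·)).map Fin.castSucc ++ [Fin.last m]).getD s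
      a.castSucc = ((I.sort (· ≤ ·)).getD s a).castSucc := by
    intro s hs
    rw [List.getD_append _ _ _ _ (by simpa [hq] using hs), List.getD_map]
  have hrowlast : ((I.sort (· ≤ ·)).map Fin.castSucc ++ [Fin.last m]).getD (q + 1)
      a.castSucc = Fin.last m := by
    rw [List.getD_append_right _ _ _ _ (by simp [hq])]
    simp [hq]
  have hmin0 : (J.sort (· ≤ ·)).getD 0 c = c := by
    have hl : 0 < (J.sort (· ≤ ·)).length := by simpa using hJ
    rw [List.getD_eq_getElem _ _ hl]
    have h0 := Finset.sorted_zero_eq_min'_aux J hl hJ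
    rw [List.get_eq_getElem] at h0
    rw [h0]
    have := Finset.coe_min' hJ
    rw [hmin] at this
    exact_mod_cast this
  rw [hq]
  simp only [Nat.add_sub_cancel]
  rw [Finset.prod_range_succ, hrow 0 (by omega), hrowlast]
  have e1 : q + 1 - q = 0 + 1 := by omega
  have e2 : q + 1 - (q + 1) = 0 := by omega
  rw [e1, e2, List.getD_cons_succ, List.getD_cons_succ, List.getD_cons_zero, hmin0, ← mul_assoc]
  congr 1
  simp only [Matrix.submatrix_apply, id]
  congr 1
  refine Finset.prod_congr rfl fun s hs => ?_
  rw [Finset.mem_range] at hs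
  have e3 : q + 1 - s = (q - s) + 1 := by omega
  have e4 : q + 1 - (s + 1) = (q - (s + 1)) + 1 := by omega
  rw [hrow _ (by omega), e3, e4, List.getD_cons_succ, List.getD_cons_succ]

theorem XGamma_pos {m n : ℕ} (T : Matrix (Fin m) (Fin n) ℝ) (hT : EntrywisePos T)
    (i : Fin m) (j : Fin n) : 0 < XGamma T i j := by
  have key : ∀ (I : Finset (Fin m)) (J : Finset (Fin n)), I.Nonempty → J.card = I.card →
      0 < gammaWeight T I J := by
    intro I J hI hc
    rw [gammaWeight_eq T I J hI hc i j]
    refine mul_pos (hT _ _) (Finset.prod_pos fun s _ => mul_pos (inv_pos.2 (hT _ _)) (hT _ _))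
  have hne : ∀ I : Finset (Fin m), I.min = (i : WithTop (Fin m)) → I.Nonempty := by
    intro I h
    exact ⟨i, Finset.mem_of_min h⟩
  unfold XGamma
  rw [Matrix.of_apply]
  refine Finset.sum_pos' (fun I hI => Finset.sum_nonneg fun J hJ => ?_) ⟨{i}, by simp, ?_⟩
  · simp only [Finset.mem_filter, Finset.mem_univ, true_and] at hI hJ
    exact (key I J (hne I hI) hJ.2).le
  · refine Finset.sum_pos (fun J hJ => ?_) ⟨{j}, by simp⟩
    simp only [Finset.mem_filter, Finset.mem_univ, true_and] at hJ
    exact key _ J (by simp) hJ.2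

theorem finset_min_eq_coe {α : Type*} [LinearOrder α] (s : Finset α) (a : α) :
    s.min = (a : WithTop α) ↔ a ∈ s ∧ ∀ x ∈ s, a ≤ x := by
  constructor
  · intro h
    exact ⟨Finset.mem_of_min h, fun x hx => Finset.min_le_of_eq hx h⟩
  · rintro ⟨h1, h2⟩
    refine le_antisymm (Finset.min_le h1) (Finset.le_min fun x hx => ?_)
    exact_mod_cast h2 x hx

theorem sum_finset_fin_succ {m : ℕ} (g : Finset (Fin (m + 1)) → ℝ) :
    ∑ I, g I = ∑ I : Finset (Fin m),
      (g (I.map Fin.castSuccEmb) + g (insert (Fin.last m) (I.map Fin.castSuccEmb))) := by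
  have hl : Fin.last m ∉ (Finset.univ : Finset (Fin m)).map Fin.castSuccEmb := by
    simp only [Finset.mem_map, not_exists, not_and]
    intro x _ h
    exact (Fin.castSucc_lt_last x).ne h
  rw [← Finset.powerset_univ, Fin.univ_castSuccEmb, Finset.cons_eq_insert,
    Finset.sum_powerset_insert hl, ← Finset.sum_add_distrib]
  symm
  refine Finset.sum_bij (fun I _ => I.map Fin.castSuccEmb) ?_ ?_ ?_ ?_
  · intro I _
    rw [Finset.mem_powerset]
    exact Finset.map_subset_map.2 (Finset.subset_univ I)
  · intro I _ I' _ h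
    exact Finset.map_injective _ h
  · intro J hJ
    rw [Finset.mem_powerset, Finset.subset_map_iff] at hJ
    obtain ⟨I, -, rfl⟩ := hJ
    exact ⟨I, Finset.mem_univ _, rfl⟩
  · intro I _
    rfl

/-- Removing the last row of `T` amounts to a unitriangular column operation on the path-sum
matrix: a path either avoids the last row or takes its last turn there. -/
theorem XGamma_castSucc {m n : ℕ} (T : Matrix (Fin (m + 1)) (Fin n) ℝ) (hT : EntrywisePos T)
    (i : Fin m) (j : Fin n) :
    XGamma T i.castSucc j = ∑ c ∈ Finset.univ.filter (fun c : Fin n => j ≤ c),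
      XGamma (T.submatrix Fin.castSucc id) i c * ((T (Fin.last m) c)⁻¹ * T (Fin.last m) j) := by
  have hsplit : Finset.univ.filter (fun c : Fin n => j ≤ c) =
      insert j (Finset.univ.filter (fun c : Fin n => j < c)) := by
    ext c
    simp [le_iff_eq_or_lt, eq_comm]
  have hmin1 : ∀ I : Finset (Fin m), (I.map Fin.castSuccEmb).min = i.castSucc ↔
      I.min = (i : WithTop (Fin m)) := by
    intro I
    rw [finset_min_eq_coe, finset_min_eq_coe]
    simp
  have hmin2 : ∀ I : Finset (Fin m),
      (insert (Fin.last m) (I.map Fin.castSuccEmb)).min = i.castSucc ↔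
      I.min = (i : WithTop (Fin m)) := by
    intro I
    rw [finset_min_eq_coe, finset_min_eq_coe]
    simp [Fin.le_last, (Fin.castSucc_lt_last i).ne]
  have hlast : ∀ I : Finset (Fin m), Fin.last m ∉ I.map Fin.castSuccEmb := by
    intro I
    simp only [Finset.mem_map, not_exists, not_and]
    intro x _ h
    exact (Fin.castSucc_lt_last x).ne h
  rw [hsplit, Finset.sum_insert (by simp), inv_mul_cancel₀ (hT _ _).ne', mul_one]
  simp only [XGamma, Matrix.of_apply]
  rw [Finset.sum_filter, sum_finset_fin_succ, Finset.sum_add_distrib]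
  simp only [hmin1, hmin2]
  rw [← Finset.sum_filter, ← Finset.sum_filter]
  congr 1
  · refine Finset.sum_congr rfl fun I hI => ?_
    simp only [Finset.mem_filter, Finset.mem_univ, true_and] at hI
    rw [Finset.card_map]
    refine Finset.sum_congr rfl fun J hJ => ?_
    simp only [Finset.mem_filter, Finset.mem_univ, true_and] at hJ
    exact gammaWeight_map T I J ⟨i, Finset.mem_of_min hI⟩ hJ.2
  · simp only [Finset.sum_mul]
    rw [Finset.sum_comm]
    refine Finset.sum_congr rfl fun I hI => ?_
    simp only [Finset.mem_filter, Finset.mem_univ, true_and] at hI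
    have hIne : I.Nonempty := ⟨i, Finset.mem_of_min hI⟩
    rw [Finset.card_insert_of_notMem (hlast I), Finset.card_map, Finset.sum_sigma']
    symm
    -- A column set with minimum `j` and at least two elements is `j` together with a set whose
    -- minimum `c` exceeds `j`.
    refine Finset.sum_bij (fun p _ => insert j p.2) ?_ ?_ ?_ ?_
    · rintro ⟨c, J⟩ h
      simp only [Finset.mem_sigma, Finset.mem_filter, Finset.mem_univ, true_and,
        finset_min_eq_coe] at h ⊢
      obtain ⟨hjc, ⟨hc, hmin⟩, hcard⟩ := h
      have hjJ : j ∉ J := fun hj => absurd (hmin j hj) (not_le.2 hjc)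
      refine ⟨⟨by simp, ?_⟩, by rw [Finset.card_insert_of_notMem hjJ, hcard]⟩
      intro x hx
      rcases Finset.mem_insert.1 hx with rfl | hx
      · exact le_rfl
      · exact hjc.le.trans (hmin x hx)
    · rintro ⟨c, J⟩ h ⟨c', J'⟩ h' heq
      simp only [Finset.mem_sigma, Finset.mem_filter, Finset.mem_univ, true_and] at h h'
      have hn : j ∉ J := fun hj => absurd (Finset.min_le_of_eq hj h.2.1) (not_le.2 h.1)
      have hn' : j ∉ J' := fun hj => absurd (Finset.min_le_of_eq hj h'.2.1) (not_le.2 h'.1)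
      have hJ : J = J' := by
        rw [← Finset.erase_insert hn, ← Finset.erase_insert hn']
        exact congrArg (fun s => Finset.erase s j) heq
      subst hJ
      have : (c : WithTop (Fin n)) = c' := h.2.1.symm.trans h'.2.1
      obtain rfl : c = c' := by exact_mod_cast this
      rfl
    · intro J hJ
      simp only [Finset.mem_filter, Finset.mem_univ, true_and, finset_min_eq_coe] at hJ
      obtain ⟨⟨hj, hmin⟩, hcard⟩ := hJ
      have hce : (J.erase j).card = I.card := by rw [Finset.card_erase_of_mem hj, hcard]; rfl
      have hne : (J.erase j).Nonempty := by rw [← Finset.card_pos, hce]; exact hIne.card_pos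
      refine ⟨⟨(J.erase j).min' hne, J.erase j⟩, ?_, Finset.insert_erase hj⟩
      simp only [Finset.mem_sigma, Finset.mem_filter, Finset.mem_univ, true_and]
      refine ⟨?_, (Finset.coe_min' hne).symm, hce⟩
      have hm := Finset.min'_mem _ hne
      exact lt_of_le_of_ne (hmin _ (Finset.mem_of_mem_erase hm)) (Finset.ne_of_mem_erase hm).symm
    · rintro ⟨c, J⟩ h
      simp only [Finset.mem_sigma, Finset.mem_filter, Finset.mem_univ, true_and] at h
      exact (gammaWeight_insert T I J hIne h.2.2 j c h.1 h.2.1).symm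

/-! ### Minors in the rightmost columns -/

/-- The extension of a matrix by zero to a function on `ℕ × ℕ` (0-based indices). -/
noncomputable def natExt {m n : ℕ} (A : Matrix (Fin m) (Fin n) ℝ) (a b : ℕ) : ℝ :=
  if h : a < m ∧ b < n then A ⟨a, h.1⟩ ⟨b, h.2⟩ else 0

/-- The `p × p` minor of `Y` with rows `ρ 0, …, ρ (p - 1)` and columns `γ 0, …, γ (p - 1)`. -/
noncomputable def natMinor (Y : ℕ → ℕ → ℝ) (p : ℕ) (ρ γ : ℕ → ℕ) : ℝ :=
  (Matrix.of fun s t : Fin p => Y (ρ s) (γ t)).det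

theorem natExt_val {m n : ℕ} (A : Matrix (Fin m) (Fin n) ℝ) (a : Fin m) (b : Fin n) :
    natExt A a b = A a b := by
  simp [natExt]

theorem natMinor_congr (Y Y' : ℕ → ℕ → ℝ) {p p' : ℕ} (hp : p = p') (ρ γ ρ' γ' : ℕ → ℕ)
    (h : ∀ s t, s < p → t < p → Y (ρ s) (γ t) = Y' (ρ' s) (γ' t)) :
    natMinor Y p ρ γ = natMinor Y' p' ρ' γ' := by
  subst hp
  unfold natMinor
  congr 1
  ext s t
  exact h s t s.2 t.2

theorem natMinor_pos {m n : ℕ} {X : Matrix (Fin m) (Fin n) ℝ} (hX : TotallyPositive X)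
    (p : ℕ) (ρ γ : ℕ → ℕ) (hρ : ∀ s t, s < t → t < p → ρ s < ρ t) (hρm : ∀ s, s < p → ρ s < m)
    (hγ : ∀ s t, s < t → t < p → γ s < γ t) (hγn : ∀ s, s < p → γ s < n) :
    0 < natMinor (natExt X) p ρ γ := by
  have := hX p (fun s => ⟨ρ s, hρm s s.2⟩) (fun s => ⟨γ s, hγn s s.2⟩)
    (fun s t hst => hρ s t hst t.2) (fun s t hst => hγ s t hst t.2)
  suffices h : (Matrix.of fun s t : Fin p => natExt X (ρ s) (γ t)) = X.submatrix
      (fun s : Fin p => (⟨ρ s, hρm s s.2⟩ : Fin m)) (fun s : Fin p => (⟨γ s, hγn s s.2⟩ : Fin n)) by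
    unfold natMinor
    rw [h]
    exact this
  ext s t
  exact natExt_val X ⟨ρ s, hρm s s.2⟩ ⟨γ t, hγn t t.2⟩

theorem corner_step {m n : ℕ} (T : Matrix (Fin (m + 1)) (Fin n) ℝ) (hT : EntrywisePos T)
    (p : ℕ) (hpn : p ≤ n) (ρ : ℕ → ℕ) (hρ : ∀ s, s < p → ρ s < m) :
    natMinor (natExt (XGamma T)) p ρ (fun s => n - p + s) =
      natMinor (natExt (XGamma (T.submatrix Fin.castSucc id))) p ρ (fun s => n - p + s) := by
  let e : Fin p → Fin n := fun s => ⟨n - p + s, by have := s.2; omega⟩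
  let B : Matrix (Fin p) (Fin p) ℝ := Matrix.of fun u t =>
    if t ≤ u then (T (Fin.last m) (e u))⁻¹ * T (Fin.last m) (e t) else 0
  have hB : B.det = 1 := by
    rw [Matrix.det_of_isLowerTriangular]
    · refine Finset.prod_eq_one fun u _ => ?_
      simp [B, (hT (Fin.last m) (e u)).ne']
    · intro u t hut
      have : ¬ t ≤ u := not_le.2 hut
      simp [B, this]
  unfold natMinor
  rw [← mul_one (Matrix.det (Matrix.of fun s t : Fin p =>
    natExt (XGamma (T.submatrix Fin.castSucc id)) (ρ s) (n - p + t))), ← hB, ← Matrix.det_mul]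
  congr 1
  ext s t
  rw [Matrix.mul_apply]
  simp only [Matrix.of_apply]
  have h1 := natExt_val (XGamma T) (Fin.castSucc ⟨ρ s, hρ s s.2⟩) (e t)
  have h2 : ∀ u : Fin p, natExt (XGamma (T.submatrix Fin.castSucc id)) (ρ s) (n - p + u) =
      XGamma (T.submatrix Fin.castSucc id) ⟨ρ s, hρ s s.2⟩ (e u) := fun u =>
    natExt_val (XGamma (T.submatrix Fin.castSucc id)) ⟨ρ s, hρ s s.2⟩ (e u)
  simp only [Fin.val_castSucc, e] at h1
  rw [h1, XGamma_castSucc T hT]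
  simp only [h2, B, Matrix.of_apply, mul_ite, mul_zero]
  rw [← Finset.sum_filter]
  symm
  refine Finset.sum_bij (fun u _ => e u) ?_ ?_ ?_ ?_
  · intro u hu
    simp only [Finset.mem_filter, Finset.mem_univ, true_and, e, Fin.mk_le_mk] at hu ⊢
    have : (t : ℕ) ≤ u := hu
    omega
  · intro u _ v _ h
    simp only [e, Fin.mk.injEq] at h
    exact Fin.ext (by omega)
  · intro c hc
    simp only [Finset.mem_filter, Finset.mem_univ, true_and] at hc
    have hc' : n - p + t ≤ (c : ℕ) := hc
    have := c.2
    refine ⟨⟨c - (n - p), by omega⟩, ?_, Fin.ext ?_⟩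
    · simp only [Finset.mem_filter, Finset.mem_univ, true_and]
      show (t : ℕ) ≤ c - (n - p)
      omega
    · show n - p + (c - (n - p)) = (c : ℕ)
      omega
  · intro u _
    rfl

/-- Minors in the rightmost columns and in the first `k` rows depend only on the first `k` rows
of the scaffolding. -/
theorem corner_eq {n k : ℕ} (d : ℕ) (T : Matrix (Fin (k + d)) (Fin n) ℝ) (hT : EntrywisePos T)
    (p : ℕ) (hpn : p ≤ n) (ρ : ℕ → ℕ) (hρ : ∀ s, s < p → ρ s < k) :
    natMinor (natExt (XGamma T)) p ρ (fun s => n - p + s) =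
      natMinor (natExt (XGamma (Matrix.of fun (a : Fin k) (b : Fin n) => T (Fin.castAdd d a) b)))
        p ρ (fun s => n - p + s) := by
  induction d with
  | zero => rfl
  | succ d ih =>
    have hT' : EntrywisePos (T.submatrix (Fin.castSucc (n := k + d)) id) := fun i j => hT _ _
    rw [corner_step (m := k + d) T hT p hpn ρ (fun s hs => (hρ s hs).trans_le (by omega)),
      ih _ hT']
    rfl

/-! ### Expanding row `k + 1` along the bordered minors -/

/-- The numerators and denominators of the system, with 0-based column indices: the minor
`det A[{⋯k−1, k}, {⋯i, j+1}]` for 1-based indices. -/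
noncomputable def bord (Y : ℕ → ℕ → ℝ) (k i j : ℕ) : ℝ :=
  natMinor Y (min (k - 1) i + 1) (fun s => k - 1 - min (k - 1) i + s)
    (fun s => if s = min (k - 1) i then j else i - min (k - 1) i + s)

theorem borderMinorBR_eq {M N : ℕ} (A : Matrix (Fin M) (Fin N) ℝ) (k i j : ℕ) (hk : 1 ≤ k)
    (hkM : k ≤ M) (hij : i ≤ j) (hj : j < N) :
    borderMinorBR A (k - 1) i k (j + 1) = bord (natExt A) k i j := by
  unfold borderMinorBR
  rw [dif_pos ⟨hk, hkM, by omega, by omega⟩]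
  by_cases h2 : 1 ≤ k - 1 ∧ k - 1 < k ∧ 1 ≤ i ∧ i < j + 1
  · rw [dif_pos h2]
    have hp : min (k - 1 - 1) (i - 1) + 2 = min (k - 1) i + 1 := by omega
    unfold bord
    rw [natMinor_congr (natExt A) (natExt A) hp.symm _ _
      (fun s => if s = min (k - 1 - 1) (i - 1) + 1 then k - 1
        else k - 1 - 1 - min (k - 1 - 1) (i - 1) + s)
      (fun s => if s = min (k - 1 - 1) (i - 1) + 1 then j
        else i - 1 - min (k - 1 - 1) (i - 1) + s)]
    · unfold natMinor
      congr 1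
      ext s t
      refine (natExt_val A _ _).symm.trans ?_
      rw [Matrix.of_apply]
      congr 1
      · dsimp only
        split_ifs <;> rfl
      · dsimp only
        split_ifs <;> simp
    · intro s t hs ht
      congr 1 <;> split_ifs <;> omega
  · rw [dif_neg h2]
    have hq : min (k - 1) i = 0 := by omega
    unfold bord
    rw [natMinor_congr (natExt A) (natExt A) (show min (k - 1) i + 1 = 1 by omega) _ _
      (fun _ => k - 1) (fun _ => j)]
    · simp only [natMinor, Matrix.det_unique, Matrix.of_apply]
      exact (natExt_val A ⟨k - 1, by omega⟩ ⟨j, hj⟩).symm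
    · intro s t hs ht
      have hs0 : s = 0 := by omega
      have ht0 : t = 0 := by omega
      subst hs0 ht0
      simp [hq]

theorem bord_linear (Y : ℕ → ℕ → ℝ) (k i : ℕ) (hk : 1 ≤ k) :
    ∃ α : ℕ → ℝ, (∀ a, a + i + 1 < k → α a = 0) ∧
      ∀ j, bord Y k i j = ∑ a ∈ Finset.range k, α a * Y a j := by
  set q := min (k - 1) i with hq
  have hqk : q ≤ k - 1 := min_le_left _ _
  have hqi : q ≤ i := min_le_right _ _
  let A : Matrix (Fin (q + 1)) (Fin (q + 1)) ℝ := Matrix.of fun s t : Fin (q + 1) =>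
    Y (k - 1 - q + s) (i - q + t)
  refine ⟨fun a => ∑ s : Fin (q + 1), if k - 1 - q + s = a then A.adjugate (Fin.last q) s else 0,
    ?_, ?_⟩
  · intro a ha
    refine Finset.sum_eq_zero fun s _ => if_neg ?_
    omega
  · intro j
    -- The minor is an entry of a Cramer vector, hence linear in its last column.
    have h1 : bord Y k i j = A.cramer (fun s => Y (k - 1 - q + s) j) (Fin.last q) := by
      rw [Matrix.cramer_apply]
      unfold bord natMinor
      congr 1
      ext s t
      rw [Matrix.updateCol_apply]
      simp only [Matrix.of_apply, A, ← hq, Fin.ext_iff, Fin.val_last]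
      split_ifs <;> rfl
    rw [h1, Matrix.cramer_eq_adjugate_mulVec, Matrix.mulVec, dotProduct]
    simp only [Finset.sum_mul]
    rw [Finset.sum_comm]
    refine Finset.sum_congr rfl fun s _ => ?_
    simp only [ite_mul, zero_mul]
    rw [Finset.sum_ite_eq, if_pos]
    rw [Finset.mem_range]
    have := s.2
    omega

theorem bord_eq_zero (Y : ℕ → ℕ → ℝ) (k i c : ℕ) (hc : c < i) (hk : i + 1 ≤ c + k) :
    bord Y k i c = 0 := by
  unfold bord natMinor
  have hlt : c - (i - min (k - 1) i) < min (k - 1) i := by omega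
  refine Matrix.det_zero_of_column_eq (i := ⟨c - (i - min (k - 1) i), by omega⟩)
    (j := Fin.last _) ?_ ?_
  · simp only [ne_eq, Fin.ext_iff, Fin.val_last]
    omega
  · intro s
    simp only [Matrix.of_apply, Fin.val_last, if_true]
    rw [if_neg (by omega)]
    congr 1
    omega

/-- If some combination of the other rows can be added to the last row so that all its entries
but the last one vanish, the determinant is the complementary minor times the remaining entry. -/
theorem det_of_last_row {p : ℕ} (A : Matrix (Fin (p + 1)) (Fin (p + 1)) ℝ) (b : Fin p → ℝ)
    (h : ∀ t : Fin p, A (Fin.last p) t.castSucc + ∑ s, b s * A s.castSucc t.castSucc = 0) :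
    A.det = (A.submatrix Fin.castSucc Fin.castSucc).det *
      (A (Fin.last p) (Fin.last p) + ∑ s, b s * A s.castSucc (Fin.last p)) := by
  let c : Fin (p + 1) → ℝ := Fin.snoc b 1
  have hrow : ∀ t, (∑ k, c k • A k) t = A (Fin.last p) t + ∑ s, b s * A s.castSucc t := by
    intro t
    rw [Finset.sum_apply, Fin.sum_univ_castSucc, add_comm]
    simp [c]
  have hdet := Matrix.det_updateRow_sum A (Fin.last p) c
  have hcl : c (Fin.last p) = 1 := by simp [c]
  rw [hcl, one_smul] at hdet
  rw [← hdet, Matrix.det_succ_row _ (Fin.last p), Fin.sum_univ_castSucc, Finset.sum_eq_zero]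
  · have hsub : ((A.updateRow (Fin.last p) (∑ k, c k • A k)).submatrix
        (Fin.last p).succAbove (Fin.last p).succAbove) =
        A.submatrix Fin.castSucc Fin.castSucc := by
      ext s t
      simp only [Matrix.submatrix_apply, Fin.succAbove_last]
      rw [Matrix.updateRow_ne (Fin.castSucc_lt_last s).ne]
    rw [hsub, Matrix.updateRow_self, hrow]
    simp only [Fin.val_last, Even.neg_one_pow (Even.add_self p)]
    ring
  · intro t _
    rw [Matrix.updateRow_self, hrow, h t]
    simp

/-- Greedy elimination for expanding row `k` (0-based) of `Y` along the vectors
`j ↦ bord Y k i j / bord Y k i i`, `j ≥ i`: `resid Y k i` is what is left after the coefficients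
of the first `i` vectors have been chosen, the coefficient of the `i`-th one being
`resid Y k i i`. -/
noncomputable def resid (Y : ℕ → ℕ → ℝ) (k : ℕ) : ℕ → ℕ → ℝ
  | 0, j => Y k j
  | i + 1, j => resid Y k i j - resid Y k i i * (bord Y k i j / bord Y k i i)

theorem resid_eq_sub_sum (Y : ℕ → ℕ → ℝ) (k i j : ℕ) :
    resid Y k i j =
      Y k j - ∑ i' ∈ Finset.range i, bord Y k i' j / bord Y k i' i' * resid Y k i' i' := by
  induction i with
  | zero => simp [resid]
  | succ i ih =>
    rw [resid, ih, Finset.sum_range_succ]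
    ring

theorem bord_self_pos {m n : ℕ} {X : Matrix (Fin m) (Fin n) ℝ} (hX : TotallyPositive X)
    (k i : ℕ) (hk : 1 ≤ k) (hkm : k ≤ m) (hi : i < n) : 0 < bord (natExt X) k i i := by
  unfold bord
  apply natMinor_pos hX <;> intros <;> first | omega | (split_ifs <;> omega)

/-- The residual is row `k` plus a combination of the `min k i` rows above it, and it vanishes in
the `min k i` columns before column `i`. -/
theorem resid_invariant {m n : ℕ} {X : Matrix (Fin m) (Fin n) ℝ} (hX : TotallyPositive X)
    (k : ℕ) (hk : 1 ≤ k) (hkm : k ≤ m) (i : ℕ) (hi : i ≤ n) :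
    (∃ β : ℕ → ℝ, (∀ a, a + i < k → β a = 0) ∧ ∀ j, resid (natExt X) k i j =
      natExt X k j + ∑ a ∈ Finset.range k, β a * natExt X a j) ∧
    ∀ c, c < i → i ≤ c + k → resid (natExt X) k i c = 0 := by
  induction i with
  | zero => exact ⟨⟨0, by simp, by simp [resid]⟩, by simp⟩
  | succ i ih =>
    obtain ⟨⟨β, hβ, hres⟩, hzero⟩ := ih (by omega)
    obtain ⟨α, hα, hlin⟩ := bord_linear (natExt X) k i hk
    have hpos := bord_self_pos hX k i hk hkm (by omega)
    refine ⟨⟨fun a => β a - resid (natExt X) k i i / bord (natExt X) k i i * α a, ?_, ?_⟩, ?_⟩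
    · intro a ha
      simp only
      rw [hβ a (by omega), hα a (by omega)]
      ring
    · intro j
      simp only [sub_mul, Finset.sum_sub_distrib, mul_assoc, ← Finset.mul_sum]
      rw [← hlin, resid, hres j]
      ring
    · intro c hc hck
      rw [resid]
      rcases Nat.lt_succ_iff_lt_or_eq.1 hc with h | rfl
      · rw [hzero c h (by omega), bord_eq_zero _ k i c h (by omega)]
        simp
      · rw [div_self hpos.ne']
        ring

/-- The entry `resid (natExt X) k i i` is the quotient of two contiguous minors of `X`, of sizes
`min k i + 1` and `min k i`. -/
theorem resid_self_pos {m n : ℕ} {X : Matrix (Fin m) (Fin n) ℝ} (hX : TotallyPositive X)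
    (k : ℕ) (hk : 1 ≤ k) (hkm : k < m) (i : ℕ) (hi : i < n) : 0 < resid (natExt X) k i i := by
  obtain ⟨⟨β, hβ, hres⟩, hzero⟩ := resid_invariant hX k hk hkm.le i hi.le
  obtain ⟨p, hp⟩ : ∃ p, p = min k i := ⟨_, rfl⟩
  have hsum : ∀ j, ∑ s : Fin p, β (k - p + s) * natExt X (k - p + s) j =
      ∑ a ∈ Finset.range k, β a * natExt X a j := by
    intro j
    have hkp : k = (k - p) + p := by omega
    conv_rhs => rw [hkp, Finset.sum_range_add]
    rw [Finset.sum_eq_zero (s := Finset.range (k - p)), zero_add, Finset.sum_range]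
    intro a ha
    rw [Finset.mem_range] at ha
    rw [hβ a (by omega), zero_mul]
  have hkp : k - p + p = k := by omega
  have hip : i - p + p = i := by omega
  have hmin : natMinor (natExt X) (p + 1) (fun s => k - p + s) (fun s => i - p + s) =
      natMinor (natExt X) p (fun s => k - p + s) (fun s => i - p + s) *
        resid (natExt X) k i i := by
    unfold natMinor
    rw [det_of_last_row _ (fun s : Fin p => β (k - p + s))]
    · congr 1
      simp only [Matrix.of_apply, Fin.val_last, Fin.val_castSucc]
      rw [hres i, hkp, hip, hsum]
    · intro t
      simp only [Matrix.of_apply, Fin.val_last, Fin.val_castSucc]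
      rw [hsum, hkp, ← hres]
      have := t.2
      exact hzero _ (by omega) (by omega)
  have h1 : 0 < natMinor (natExt X) (p + 1) (fun s => k - p + s) (fun s => i - p + s) := by
    apply natMinor_pos hX <;> intros <;> omega
  have h2 : 0 < natMinor (natExt X) p (fun s => k - p + s) (fun s => i - p + s) := by
    apply natMinor_pos hX <;> intros <;> omega
  rw [hmin] at h1
  exact (mul_pos_iff_of_pos_left h2).1 h1

/-- Row `k` (0-based) of a totally positive matrix expanded along the columns of the lower
unitriangular matrix built from the rows before it; for `k < m` the coefficients are positive by
`resid_self_pos`. -/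
theorem next_row_eq {m n : ℕ} {X : Matrix (Fin m) (Fin n) ℝ} (hX : TotallyPositive X)
    (k : ℕ) (hk : 1 ≤ k) (hkm : k ≤ m) (j : ℕ) (hj : j < n) :
    natExt X k j = ∑ i ∈ Finset.range (j + 1),
      bord (natExt X) k i j / bord (natExt X) k i i * resid (natExt X) k i i := by
  have h := resid_eq_sub_sum (natExt X) k j j
  rw [Finset.sum_range_succ, div_self (bord_self_pos hX k j hk hkm hj).ne']
  linarith

/-! ### The linear system -/

theorem exists_scale_pos {n : ℕ} (a b : Fin n → ℝ) (ha : ∀ j, 0 < a j) :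
    ∃ C : ℝ, 0 ≤ C ∧ ∀ j, 0 < b j + C * a j := by
  have h : ∀ j, ∀ᶠ C : ℝ in Filter.atTop, 0 < b j + C * a j := by
    intro j
    filter_upwards [Filter.eventually_gt_atTop (-b j / a j)] with C hC
    rw [div_lt_iff₀ (ha j)] at hC
    linarith
  obtain ⟨C, hC0, hC⟩ := ((Filter.eventually_ge_atTop 0).and (Filter.eventually_all.2 h)).exists
  exact ⟨C, hC0, hC⟩

/-- The system `U r = L q`, `r = M s` with `U` upper triangular and `L`, `M` lower triangular has
a positive solution once the last column of `U` lies in the open cone spanned by the columns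
of `L`: take `s` to be a large multiple of the last unit vector plus a fixed vector. -/
theorem exists_positive_solution {N : ℕ} (L M U : Fin (N + 1) → Fin (N + 1) → ℝ)
    (hL : ∀ j, L j j = 1) (hM0 : ∀ j, 0 < M j 0) (hMl : M (Fin.last N) (Fin.last N) = 1)
    (qs : Fin (N + 1) → ℝ) (hqs : ∀ i, 0 < qs i)
    (hU : ∀ j, U j (Fin.last N) = ∑ i ∈ Finset.univ.filter (fun i => i ≤ j), L j i * qs i) :
    ∃ r q s : Fin (N + 1) → ℝ, (∀ b, 0 < r b) ∧ (∀ b, 0 < q b) ∧ (∀ b, 0 < s b) ∧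
      ∀ j, (∑ l ∈ Finset.univ.filter (fun l => j ≤ l), U j l * r l =
          ∑ i ∈ Finset.univ.filter (fun i => i ≤ j), L j i * q i) ∧
        r j = ∑ i ∈ Finset.univ.filter (fun i => i ≤ j), M j i * s i := by
  obtain ⟨C₀, hC₀, hr⟩ := exists_scale_pos (fun j => M j 0)
    (fun j => ∑ i ∈ Finset.univ.filter (fun i => i ≤ j), M j i) hM0
  let e : Fin (N + 1) → ℝ := fun i => if i = Fin.last N then 1 else 0
  let s₀ : Fin (N + 1) → ℝ := fun i => 1 + C₀ * (if i = 0 then 1 else 0)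
  let r₀ : Fin (N + 1) → ℝ := fun j =>
    ∑ i ∈ Finset.univ.filter (fun i => i ≤ j), M j i * s₀ i
  have hr₀ : ∀ j, 0 < r₀ j := by
    intro j
    have : r₀ j = ∑ i ∈ Finset.univ.filter (fun i => i ≤ j), M j i + C₀ * M j 0 := by
      simp only [r₀, s₀, mul_add, mul_one, Finset.sum_add_distrib, mul_ite, mul_zero]
      rw [Finset.sum_ite_eq', if_pos (by simp)]
      ring
    rw [this]
    exact hr j
  let A : Matrix (Fin (N + 1)) (Fin (N + 1)) ℝ := Matrix.of fun j i => if i ≤ j then L j i else 0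
  have hA : IsUnit A.det := by
    rw [Matrix.det_of_isLowerTriangular, Finset.prod_eq_one]
    · exact isUnit_one
    · intro j _
      simp [A, hL]
    · intro j i hji
      have : ¬ i ≤ j := not_le.2 hji
      simp [A, this]
  let v : Fin (N + 1) → ℝ := fun j => ∑ l ∈ Finset.univ.filter (fun l => j ≤ l), U j l * r₀ l
  let q₀ : Fin (N + 1) → ℝ := A⁻¹.mulVec v
  have hq₀ : ∀ j, v j = ∑ i ∈ Finset.univ.filter (fun i => i ≤ j), L j i * q₀ i := by
    intro j
    have h1 : A.mulVec q₀ = v := by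
      simp only [q₀]
      rw [Matrix.mulVec_mulVec, Matrix.mul_nonsing_inv _ hA, Matrix.one_mulVec]
    rw [← h1, Matrix.mulVec, dotProduct, Finset.sum_filter]
    refine Finset.sum_congr rfl fun i _ => ?_
    simp only [A, Matrix.of_apply, ite_mul, zero_mul]
  obtain ⟨C, hC, hq⟩ := exists_scale_pos qs q₀ hqs
  have he : ∀ i, 0 ≤ e i := fun i => by simp only [e]; split_ifs <;> norm_num
  refine ⟨fun j => r₀ j + C * e j, fun i => q₀ i + C * qs i, fun i => s₀ i + C * e i,
    fun b => add_pos_of_pos_of_nonneg (hr₀ b) (mul_nonneg hC (he b)), hq, fun b => ?_,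
    fun j => ⟨?_, ?_⟩⟩
  · refine add_pos_of_pos_of_nonneg ?_ (mul_nonneg hC (he b))
    refine add_pos_of_pos_of_nonneg one_pos (mul_nonneg hC₀ ?_)
    split_ifs <;> norm_num
  · have hl : ∑ l ∈ Finset.univ.filter (fun l => j ≤ l), U j l * e l = U j (Fin.last N) := by
      simp only [e, mul_ite, mul_one, mul_zero]
      rw [Finset.sum_ite_eq', if_pos (by simp [Fin.le_last])]
    have hv := hq₀ j
    simp only [mul_add, Finset.sum_add_distrib, mul_left_comm _ C, ← Finset.mul_sum]
    rw [hl, hU, ← hv]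
  · have hl : ∑ i ∈ Finset.univ.filter (fun i => i ≤ j), M j i * e i = e j := by
      simp only [e, mul_ite, mul_one, mul_zero]
      rw [Finset.sum_ite_eq']
      by_cases hj : j = Fin.last N
      · subst hj
        simp [hMl]
      · rw [if_neg, if_neg hj]
        simpa [Fin.last_le_iff] using hj
    simp only [mul_add, Finset.sum_add_distrib, mul_left_comm _ C, ← Finset.mul_sum]
    rw [hl]

theorem borderMinorBR_zero {M N : ℕ} (A : Matrix (Fin M) (Fin N) ℝ) (k j : ℕ) (hk : 1 ≤ k)
    (hkM : k ≤ M) (hj : j < N) :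
    borderMinorBR A (k - 1) 0 k (j + 1) = A ⟨k - 1, by omega⟩ ⟨j, hj⟩ := by
  unfold borderMinorBR
  rw [dif_pos ⟨hk, hkM, by omega, by omega⟩, dif_neg (by omega)]
  rfl

theorem borderMinorTL_last {M N : ℕ} (A : Matrix (Fin M) (Fin (N + 1)) ℝ) (k j : ℕ)
    (hkM : k < M) (hj : j < N + 1) :
    borderMinorTL A (k + 1) (j + 1) (k + 2) (N + 2) = natExt A k j := by
  unfold borderMinorTL
  rw [dif_pos ⟨by omega, by omega, by omega, by omega⟩, dif_neg (by omega)]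
  exact (natExt_val A ⟨k, hkM⟩ ⟨j, hj⟩).symm

/-- the homogeneous linear system (A) ∧ (B) for row insertion always has a
strongly positive solution `(r, q, s)`. -/
theorem row_insertion_system_has_positive_solution {m n : ℕ}
    (X : Matrix (Fin m) (Fin n) ℝ)
    (hX : TotallyPositive X) (k : ℕ) (hk1 : 1 ≤ k) (hk2 : k ≤ m - 1)
    (T : Matrix (Fin m) (Fin n) ℝ) (hTpos : EntrywisePos T) (hTX : XGamma T = X)
    (Xhat : Matrix (Fin k) (Fin n) ℝ)
    (hXhat : Xhat = XGamma (Matrix.of fun (a : Fin k) (b : Fin n) =>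
      T ⟨(a : ℕ), by have := a.isLt; omega⟩ b)) :
    ∃ r q s : Fin n → ℝ,
      (∀ b, 0 < r b) ∧ (∀ b, 0 < q b) ∧ (∀ b, 0 < s b) ∧
      ∀ j : Fin n,
        ((∑ l ∈ Finset.univ.filter (fun l : Fin n => j ≤ l),
            borderMinorTL X (k + 1) ((j : ℕ) + 1) (k + 2) ((l : ℕ) + 2) /
                borderMinorTL X (k + 1) ((l : ℕ) + 1) (k + 2) ((l : ℕ) + 2) * r l)
          = ∑ i ∈ Finset.univ.filter (fun i : Fin n => i ≤ j),
              borderMinorBR X (k - 1) (i : ℕ) k ((j : ℕ) + 1) /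
                  borderMinorBR X (k - 1) (i : ℕ) k ((i : ℕ) + 1) * q i) ∧
        (r j = ∑ i ∈ Finset.univ.filter (fun i : Fin n => i ≤ j),
            borderMinorBR Xhat (k - 1) (i : ℕ) k ((j : ℕ) + 1) /
                borderMinorBR Xhat (k - 1) (i : ℕ) k ((i : ℕ) + 1) * s i) := by
  obtain ⟨d, rfl⟩ : ∃ d, m = k + d := ⟨m - k, by omega⟩
  rcases n with _ | N
  · exact ⟨fun _ => 1, fun _ => 1, fun _ => 1, fun _ => one_pos, fun _ => one_pos,
      fun _ => one_pos, fun j => j.elim0⟩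
  have hkm : k < k + d := by omega
  have hhat : ∀ a b, 0 < Xhat a b := by
    subst hXhat
    exact XGamma_pos _ fun a b => hTpos _ _
  have hcorner : 0 < bord (natExt Xhat) k N N := by
    have hX' := bord_self_pos hX k N hk1 hkm.le (Nat.lt_succ_self N)
    have hform : ∀ Y, bord Y k N N = natMinor Y (min (k - 1) N + 1)
        (fun s => k - 1 - min (k - 1) N + s)
        (fun s => N + 1 - (min (k - 1) N + 1) + s) := by
      intro Y
      refine natMinor_congr Y Y rfl _ _ _ _ fun s t hs ht => ?_
      congr 1
      split_ifs <;> omega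
    rw [hform] at hX' ⊢
    rw [← hTX, corner_eq d T hTpos _ (by omega) _ (by omega)] at hX'
    rw [hXhat]
    exact hX'
  have hxpos : ∀ j, j < N + 1 → 0 < natExt X k j := by
    intro j hj
    have h := hX 1 (fun _ => ⟨k, hkm⟩) (fun _ => ⟨j, hj⟩) (Subsingleton.strictMono _)
      (Subsingleton.strictMono _)
    rw [Matrix.det_unique, Matrix.submatrix_apply] at h
    rw [natExt_val X ⟨k, hkm⟩ ⟨j, hj⟩]
    exact h
  refine exists_positive_solution
    (fun j i : Fin (N + 1) => borderMinorBR X (k - 1) (i : ℕ) k ((j : ℕ) + 1) /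
      borderMinorBR X (k - 1) (i : ℕ) k ((i : ℕ) + 1))
    (fun j i : Fin (N + 1) => borderMinorBR Xhat (k - 1) (i : ℕ) k ((j : ℕ) + 1) /
      borderMinorBR Xhat (k - 1) (i : ℕ) k ((i : ℕ) + 1))
    (fun j l : Fin (N + 1) => borderMinorTL X (k + 1) ((j : ℕ) + 1) (k + 2) ((l : ℕ) + 2) /
      borderMinorTL X (k + 1) ((l : ℕ) + 1) (k + 2) ((l : ℕ) + 2))
    (fun j => ?_) (fun j => ?_) ?_ (fun i => resid (natExt X) k i i / natExt X k N)
    (fun i => div_pos (resid_self_pos hX k hk1 hkm i i.2) (hxpos N (by omega))) (fun j => ?_)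
  · rw [borderMinorBR_eq X k j j hk1 hkm.le le_rfl j.2]
    exact div_self (bord_self_pos hX k j hk1 hkm.le j.2).ne'
  · simp only [Fin.val_zero]
    rw [borderMinorBR_zero Xhat k j hk1 le_rfl j.2, borderMinorBR_zero Xhat k 0 hk1 le_rfl (by omega)]
    exact div_pos (hhat _ _) (hhat _ _)
  · simp only [Fin.val_last]
    rw [borderMinorBR_eq Xhat k N N hk1 le_rfl le_rfl (by omega)]
    exact div_self hcorner.ne'
  · simp only [Fin.val_last]
    rw [borderMinorTL_last X k j hkm j.2, borderMinorTL_last X k N hkm (by omega),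
      next_row_eq hX k hk1 hkm.le j j.2, Finset.sum_div]
    symm
    refine Finset.sum_bij (fun (i : Fin (N + 1)) _ => (i : ℕ)) ?_ ?_ ?_ ?_
    · intro i hi
      simp only [Finset.mem_filter, Finset.mem_univ, true_and] at hi
      exact Finset.mem_range.2 (Nat.lt_succ_of_le hi)
    · intro i _ i' _ h
      exact Fin.ext h
    · intro i hi
      rw [Finset.mem_range] at hi
      have := j.2
      refine ⟨⟨i, by omega⟩, ?_, rfl⟩
      simp only [Finset.mem_filter, Finset.mem_univ, true_and]
      exact Nat.le_of_lt_succ hi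
    · intro i hi
      simp only [Finset.mem_filter, Finset.mem_univ, true_and] at hi
      rw [borderMinorBR_eq X k i j hk1 hkm.le hi j.2,
        borderMinorBR_eq X k i i hk1 hkm.le le_rfl i.2]
      ring
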